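/- There is a universal constant c₂ > 0 such that the following holds. Let ε ∈ (0,1), n ≥ 2, and let q be an integer with q ≥ c₂ k² (log n)/ε⁴. Then with probability at least 1 − n^{−3} over the random samples, simultaneously for all k-clusterings C' of V and all i, j ∈ [k]: |F_{i,j}(C') − F̂_{i,j}(C')| ≤ ε·|C_{ij} × (C_i \ C_{ij})|. -/

import Mathlib

open Finset

attribute [local instance] Classical.propDecidable

/-- A `k`-clustering of `V` is encoded by its cluster-assignment function `Cl : V → Fin k`;
two points are in the same cluster iff they have the same assigned index.
`cluster Cl i` is the `i`-th cluster `C_i`, as a finset. -/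
noncomputable def cluster {V : Type*} [Fintype V] {k : ℕ} (Cl : V → Fin k) (i : Fin k) : Finset V :=
  Finset.univ.filter fun v => Cl v = i

/-- `cost_{u,v}(C) = 1[(u,v) ∈ E]·1[u ≢_C v] + 1[(u,v) ∉ E]·1[u ≡_C v]`. -/
noncomputable def costuv {V : Type*} {k : ℕ} (G : SimpleGraph V) (Cl : V → Fin k) (u v : V) : ℝ :=
  (if G.Adj u v then (if Cl u = Cl v then 0 else 1) else (if Cl u = Cl v then 1 else 0))

/-- `cost(C)`: the number of unordered pairs of distinct points on which the clustering
`Cl` disagrees with the graph `G` (each unordered pair counted once, via half the sum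
over ordered pairs). -/
noncomputable def cost {V : Type*} [Fintype V] {k : ℕ} (G : SimpleGraph V) (Cl : V → Fin k) : ℝ :=
  (1 / 2) * ∑ u : V, ∑ v : V, if u ≠ v then costuv G Cl u v else 0

/-- The disagreement distance between two `k`-clusterings:
`d(C,C') = (1/2) Σ_{u ≠ v} (1[u ≡_{C'} v]·1[u ≢_C v] + 1[u ≡_C v]·1[u ≢_{C'} v])`. -/
noncomputable def dd {V : Type*} [Fintype V] {k : ℕ} (Cl Cl' : V → Fin k) : ℝ :=
  (1 / 2) * ∑ u : V, ∑ v : V, if u ≠ v then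
      ((if Cl' u = Cl' v ∧ ¬Cl u = Cl v then (1 : ℝ) else 0) +
        (if Cl u = Cl v ∧ ¬Cl' u = Cl' v then (1 : ℝ) else 0))
    else 0

/-- `f_{u,v}(C') = cost_{u,v}(C') - cost_{u,v}(C)`. -/
noncomputable def fuv {V : Type*} {k : ℕ} (G : SimpleGraph V) (Cl Cl' : V → Fin k) (u v : V) : ℝ :=
  costuv G Cl' u v - costuv G Cl u v

/-
If `u ≡_C v` and `u ≢_{C'} v`, then `f_{u,v}(C')` is `1` or `-1` according to whether `(u,v) ∈ E`.
So the error depends on `C'` only through the set `A = C_{ij}`, and it suffices to control it for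
every `A ⊆ C_i`. With `B = C_i \ A`, a single sample hits `B` with probability `|B| / |C_i|`, which
bounds its variance; Bernstein's method then bounds the failure probability for `A` by
`2 exp (-ε² q |A||B| / (4 |C_i|)) ≤ 2 (x ^ |A| + x ^ |B|)`, where `x = exp (-ε² q / 8)`, because
`|A||B| / (|A| + |B|)` is at least half the smaller of `|A|` and `|B|`. By the binomial theorem the
sum over all `A` other than `∅` and `C_i` is at most `4 ((1 + x) ^ |C_i| - 1)`, of order `|C_i| x`,
and summing over the clusters gives a failure probability of order `n x`.
-/

open MeasureTheory ProbabilityTheory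

section Bernstein

variable {Ω : Type*} [MeasurableSpace Ω] {μ : Measure Ω}

lemma exp_le_one_add_add_sq {x : ℝ} (hx : |x| ≤ 1) : Real.exp x ≤ 1 + x + x ^ 2 := by
  linarith [(abs_le.1 (Real.abs_exp_sub_one_sub_id_le hx)).2]

lemma mgf_le_exp_of_abs_le_one [IsProbabilityMeasure μ] {X : Ω → ℝ} (hXm : AEMeasurable X μ)
    (hX : ∀ᵐ ω ∂μ, |X ω| ≤ 1) {t : ℝ} (ht : |t| ≤ 1) :
    mgf X μ t ≤ Real.exp (t * μ[X] + t ^ 2 * μ[X ^ 2]) := by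
  have hX1 : Integrable X μ := .of_bound hXm.aestronglyMeasurable 1 hX
  have hX2 : Integrable (X ^ 2) μ := by
    refine .of_bound (hXm.pow_const 2).aestronglyMeasurable 1 ?_
    filter_upwards [hX] with ω hω
    simpa using hω
  calc mgf X μ t
      ≤ ∫ ω, (1 + t * X ω + t ^ 2 * (X ^ 2) ω) ∂μ := by
        refine integral_mono_ae
          (integrable_exp_mul_of_mem_Icc hXm (hX.mono fun _ => abs_le.1)) (by fun_prop) ?_
        filter_upwards [hX] with ω hω
        have htX : |t * X ω| ≤ 1 := (abs_mul t _).trans_le (mul_le_one₀ ht (abs_nonneg _) hω)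
        simpa only [mul_pow, Pi.pow_apply] using exp_le_one_add_add_sq htX
    _ = t * μ[X] + t ^ 2 * μ[X ^ 2] + 1 := by
        rw [integral_add (by fun_prop) (by fun_prop), integral_add (by fun_prop) (by fun_prop),
          integral_const_mul, integral_const_mul]
        simp only [integral_const, probReal_univ, one_smul]
        ring
    _ ≤ _ := Real.add_one_le_exp _

variable {ι : Type*} {X : ι → Ω → ℝ}

lemma measureReal_le_sum_sub_integral_le (h : iIndepFun X μ) (hXm : ∀ i, AEMeasurable (X i) μ)
    (hX : ∀ i, ∀ᵐ ω ∂μ, |X i ω| ≤ 1) {t : ℝ} (ht0 : 0 ≤ t) (ht1 : t ≤ 1) (s : Finset ι) (δ : ℝ) :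
    μ.real {ω | δ ≤ ∑ i ∈ s, (X i ω - μ[X i])} ≤
      Real.exp (-(t * δ) + t ^ 2 * ∑ i ∈ s, μ[X i ^ 2]) := by
  have : IsProbabilityMeasure μ := h.isProbabilityMeasure
  have hint : Integrable (fun ω => Real.exp (t * (∑ i ∈ s, X i) ω)) μ :=
    integrable_exp_mul_of_mem_Icc (a := -#s) (b := #s) (by fun_prop) <| by
      filter_upwards [(s.eventually_all).2 fun i _ => hX i] with ω hω
      rw [Finset.sum_apply]
      exact abs_le.1 ((abs_sum_le_sum_abs _ _).trans ((sum_le_card_nsmul _ _ 1 hω).trans (by simp)))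
  calc μ.real {ω | δ ≤ ∑ i ∈ s, (X i ω - μ[X i])}
      = μ.real {ω | δ + ∑ i ∈ s, μ[X i] ≤ (∑ i ∈ s, X i) ω} := by
        simp only [sum_sub_distrib, le_sub_iff_add_le, Finset.sum_apply]
    _ ≤ Real.exp (-t * (δ + ∑ i ∈ s, μ[X i])) * mgf (∑ i ∈ s, X i) μ t :=
        measure_ge_le_exp_mul_mgf _ ht0 hint
    _ = Real.exp (-t * (δ + ∑ i ∈ s, μ[X i])) * ∏ i ∈ s, mgf (X i) μ t := by
        rw [h.mgf_sum₀ hXm]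
    _ ≤ Real.exp (-t * (δ + ∑ i ∈ s, μ[X i])) *
          ∏ i ∈ s, Real.exp (t * μ[X i] + t ^ 2 * μ[X i ^ 2]) := by
        gcongr with i
        · exact fun _ _ => mgf_nonneg
        · exact mgf_le_exp_of_abs_le_one (hXm i) (hX i) (abs_le.2 ⟨by linarith, ht1⟩)
    _ = Real.exp (-(t * δ) + t ^ 2 * ∑ i ∈ s, μ[X i ^ 2]) := by
        rw [← Real.exp_sum, ← Real.exp_add, sum_add_distrib, ← mul_sum, ← mul_sum]
        ring_nf

lemma measureReal_le_abs_sum_sub_integral_le (h : iIndepFun X μ)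
    (hXm : ∀ i, AEMeasurable (X i) μ) (hX : ∀ i, ∀ᵐ ω ∂μ, |X i ω| ≤ 1) {t : ℝ} (ht0 : 0 ≤ t)
    (ht1 : t ≤ 1) (s : Finset ι) (δ : ℝ) :
    μ.real {ω | δ ≤ |∑ i ∈ s, (X i ω - μ[X i])|} ≤
      2 * Real.exp (-(t * δ) + t ^ 2 * ∑ i ∈ s, μ[X i ^ 2]) := by
  have : IsProbabilityMeasure μ := h.isProbabilityMeasure
  have hupper := measureReal_le_sum_sub_integral_le h hXm hX ht0 ht1 s δ
  have hlower := measureReal_le_sum_sub_integral_le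
    (h.comp (fun _ x => -x) fun _ => measurable_neg) (fun i => (hXm i).neg)
    (fun i => by simpa using hX i) ht0 ht1 s δ
  simp only [Function.comp_def, integral_neg, Pi.pow_def, neg_sq, ← neg_sub', sum_neg_distrib]
    at hlower hupper ⊢
  simp only [le_abs, Set.ofPred_or]
  linarith [measureReal_union_le {ω | δ ≤ ∑ i ∈ s, (X i ω - μ[X i])}
    {ω | δ ≤ -∑ i ∈ s, (X i ω - μ[X i])} (μ := μ)]

end Bernstein

section UniformOn

section

variable {Ω : Type*} [Fintype Ω] [MeasurableSpace Ω] [MeasurableSingletonClass Ω]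

lemma measureReal_uniformOn_univ_setOf (p : Ω → Prop) [DecidablePred p] :
    (uniformOn Set.univ).real {x | p x} = #{x | p x} / Fintype.card Ω := by
  simpa [measureReal_def] using
    congrArg ENNReal.toReal (uniformOn_apply_finset (s := (univ : Finset Ω)) (t := {x | p x}))

lemma integral_uniformOn_univ (f : Ω → ℝ) :
    ∫ x, f x ∂uniformOn Set.univ = (∑ x, f x) / Fintype.card Ω := by
  have hsingleton (x : Ω) : (uniformOn Set.univ).real {x} = (Fintype.card Ω : ℝ)⁻¹ := by
    simp [measureReal_def, uniformOn_univ]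
  rw [integral_fintype .of_finite]
  simp only [hsingleton, smul_eq_mul, inv_mul_eq_div, sum_div]

end

variable {ι : Type*} {T : ι → Type*} [∀ i, MeasurableSpace (T i)]
  [∀ i, MeasurableSingletonClass (T i)] [∀ i, Finite (T i)]

lemma uniformOn_univ_pi [Fintype ι] :
    uniformOn (Set.univ : Set (∀ i, T i)) = Measure.pi fun _ => uniformOn Set.univ := by
  refine (Measure.pi_eq fun t ht => ?_).symm
  have (i : ι) : Fintype (T i) := .ofFinite _
  lift t to ∀ i, Finset (T i) using fun i => Set.toFinite _
  have h := uniformOn_apply_finset (s := (univ : Finset (∀ i, T i))) (t := Fintype.piFinset t)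
  have h' (i : ι) := uniformOn_apply_finset (s := (univ : Finset (T i))) (t := t i)
  simp only [coe_univ, Fintype.coe_piFinset, univ_inter, card_univ] at h h'
  simp [h, h', ENNReal.prod_div_distrib_of_ne_top]

variable [Finite ι] [∀ i, Nonempty (T i)] {κ : Type*} [Finite κ]

lemma measurePreserving_eval_uniformOn_univ (i : ι) :
    MeasurePreserving (Function.eval i) (uniformOn (Set.univ : Set (∀ i, T i)))
      (uniformOn Set.univ) := by
  cases nonempty_fintype ι
  rw [uniformOn_univ_pi]
  exact measurePreserving_eval _ i

lemma iIndepFun_apply_apply_uniformOn_univ :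
    iIndepFun (fun (p : ι × κ) (ω : ∀ i, κ → T i) => ω p.1 p.2) (uniformOn Set.univ) := by
  cases nonempty_fintype ι
  cases nonempty_fintype κ
  simp only [uniformOn_univ_pi, ← Measure.infinitePi_eq_pi]
  exact iIndepFun_uncurry_infinitePi' (X := fun _ _ => id) (fun _ _ => uniformOn Set.univ)
    fun _ _ => measurable_id

end UniformOn

section CutSum

variable {V : Type*} {k q : ℕ} {Cl : V → Fin k}

instance nonempty_sameCluster (Cl : V → Fin k) (u : V) : Nonempty {v : V // Cl v = Cl u} :=
  ⟨u, rfl⟩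

/-- The sample space of the estimator: `q` points of the cluster of `u`, for every point `u`. -/
abbrev ClusterSamples (Cl : V → Fin k) (q : ℕ) : Type _ :=
  ∀ u : V, Fin q → {v : V // Cl v = Cl u}

/-- The contribution of the sample `ω p.1 p.2` to the estimate of the sum of `g` over pairs whose
second point lies in `B`. -/
noncomputable def sampleTerm (g : V → V → ℝ) (B : Finset V) (p : V × Fin q)
    (ω : ClusterSamples Cl q) : ℝ :=
  if (ω p.1 p.2).1 ∈ B then g p.1 (ω p.1 p.2).1 else 0

/-- The error of the sampling estimate of the sum of `g` over `A × B`, when `D` is the cluster from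
which the samples are drawn. For `A = C_{ij}`, `B = C_i \ C_{ij}` and `g = f(C')` this is the
difference `F_{i,j}(C') - F̂_{i,j}(C')`. -/
noncomputable def cutSumError (g : V → V → ℝ) (D A B : Finset V) (ω : ClusterSamples Cl q) : ℝ :=
  (∑ u ∈ A, ∑ v ∈ B, g u v) - (#D : ℝ) / q * ∑ u ∈ A, ∑ s, sampleTerm g B (u, s) ω

lemma cutSumError_congr {g g' : V → V → ℝ} {A B : Finset V} (h : ∀ u ∈ A, ∀ v ∈ B, g u v = g' u v)
    (D : Finset V) (ω : ClusterSamples Cl q) :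
    cutSumError g D A B ω = cutSumError g' D A B ω := by
  refine congrArg₂ _ (sum_congr rfl fun u hu => sum_congr rfl (h u hu))
    (congrArg _ (sum_congr rfl fun u hu => sum_congr rfl fun s _ => ?_))
  exact ite_congr rfl (h u hu _) fun _ => rfl

variable [Fintype V] [MeasurableSpace V] [MeasurableSingletonClass V]

lemma integral_ite_mem_of_subset_cluster {i : Fin k} {u : V} (hu : u ∈ cluster Cl i) {B : Finset V}
    (hB : B ⊆ cluster Cl i) (φ : V → ℝ) (s : Fin q) :
    ∫ ω : ClusterSamples Cl q, (if (ω u s).1 ∈ B then φ (ω u s).1 else 0) ∂uniformOn Set.univ =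
      (∑ v ∈ B, φ v) / #(cluster Cl i) := by
  have hui : Cl u = i := by simpa [cluster] using hu
  have hmp : MeasurePreserving (fun ω : ClusterSamples Cl q => ω u s) (uniformOn Set.univ)
      (uniformOn Set.univ) :=
    (measurePreserving_eval_uniformOn_univ (T := fun _ : Fin q => {v : V // Cl v = Cl u}) s).comp
      (measurePreserving_eval_uniformOn_univ u)
  rw [← integral_map (φ := fun ω : ClusterSamples Cl q => ω u s) hmp.aemeasurable
    (f := fun x => if x.1 ∈ B then φ x.1 else 0) (measurable_of_finite _).aestronglyMeasurable,
    hmp.map_eq, integral_uniformOn_univ, Fintype.card_subtype, hui, ← cluster]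
  congr 1
  rw [← sum_subtype (cluster Cl i) (by simp [cluster]) fun v => if v ∈ B then φ v else 0,
    sum_ite_mem, inter_eq_right.2 hB]

lemma sum_sampleTerm_sub_integral {i : Fin k} {A B : Finset V} (hA : A ⊆ cluster Cl i)
    (hB : B ⊆ cluster Cl i) (g : V → V → ℝ) (hq : (q : ℝ) / #(cluster Cl i) ≠ 0)
    (ω : ClusterSamples Cl q) :
    ∑ p ∈ A ×ˢ univ, (sampleTerm g B p ω -
        ∫ ω : ClusterSamples Cl q, sampleTerm g B p ω ∂uniformOn Set.univ) =
      -(q / #(cluster Cl i)) * cutSumError g (cluster Cl i) A B ω := by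
  have hmean : ∀ u ∈ A, ∀ s : Fin q,
      ∫ ω : ClusterSamples Cl q, sampleTerm g B (u, s) ω ∂uniformOn Set.univ =
        (∑ v ∈ B, g u v) / #(cluster Cl i) :=
    fun u hu s => integral_ite_mem_of_subset_cluster (hA hu) hB (g u) s
  have hmeans : ∑ u ∈ A, ∑ s : Fin q,
      ∫ ω : ClusterSamples Cl q, sampleTerm g B (u, s) ω ∂uniformOn Set.univ =
        q / #(cluster Cl i) * ∑ u ∈ A, ∑ v ∈ B, g u v := by
    rw [mul_sum]
    refine sum_congr rfl fun u hu => ?_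
    rw [sum_congr rfl fun s _ => hmean u hu s]
    simp only [sum_const, card_univ, Fintype.card_fin, nsmul_eq_mul]
    ring
  rw [sum_sub_distrib, sum_product, sum_product, hmeans, cutSumError]
  have hinv : (q : ℝ) / #(cluster Cl i) * (#(cluster Cl i) / q) = 1 := by
    rw [← inv_div (q : ℝ), mul_inv_cancel₀ hq]
  linear_combination -(∑ u ∈ A, ∑ s, sampleTerm g B (u, s) ω) * hinv

lemma sum_integral_sampleTerm_sq_le {i : Fin k} {A B : Finset V} (hA : A ⊆ cluster Cl i)
    (hB : B ⊆ cluster Cl i) {g : V → V → ℝ} (hg : ∀ u v, |g u v| ≤ 1) :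
    ∑ p ∈ A ×ˢ (univ : Finset (Fin q)),
        ∫ ω : ClusterSamples Cl q, sampleTerm g B p ω ^ 2 ∂uniformOn Set.univ ≤
      q / #(cluster Cl i) * (#A * #B) := by
  have hterm : ∀ p ∈ A ×ˢ (univ : Finset (Fin q)),
      ∫ ω : ClusterSamples Cl q, sampleTerm g B p ω ^ 2 ∂uniformOn Set.univ ≤
        (#B : ℝ) / #(cluster Cl i) := by
    intro p hp
    simp only [sampleTerm, ite_pow, ne_eq, OfNat.ofNat_ne_zero, not_false_eq_true, zero_pow]
    rw [integral_ite_mem_of_subset_cluster (hA (mem_product.1 hp).1) hB (fun v => g p.1 v ^ 2)]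
    gcongr
    simpa using sum_le_card_nsmul B _ 1 fun v _ => (sq_le_one_iff_abs_le_one _).2 (hg p.1 v)
  calc _ ≤ _ := sum_le_card_nsmul _ _ _ hterm
    _ = q / #(cluster Cl i) * (#A * #B) := by
      simp only [card_product, card_univ, Fintype.card_fin, nsmul_eq_mul, Nat.cast_mul]
      ring

lemma measureReal_le_abs_cutSumError_le {i : Fin k} {A B : Finset V} (hA : A ⊆ cluster Cl i)
    (hB : B ⊆ cluster Cl i) {g : V → V → ℝ} (hg : ∀ u v, |g u v| ≤ 1) {ε : ℝ} (hε0 : 0 ≤ ε)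
    (hε2 : ε ≤ 2) :
    (uniformOn Set.univ).real {ω : ClusterSamples Cl q |
        ε * (#A * #B) ≤ |cutSumError g (cluster Cl i) A B ω|} ≤
      2 * Real.exp (-(ε ^ 2 / 4 * (q / #(cluster Cl i) * (#A * #B)))) := by
  set r : ℝ := q / #(cluster Cl i) with hr
  obtain hr0 | hr0 := (show 0 ≤ r by positivity).eq_or_lt
  · rw [← hr0]
    simpa using measureReal_le_one.trans one_le_two
  have hindep : iIndepFun (fun (p : V × Fin q) (ω : ClusterSamples Cl q) => sampleTerm g B p ω)
      (uniformOn Set.univ) :=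
    (iIndepFun_apply_apply_uniformOn_univ (T := fun u : V => {v : V // Cl v = Cl u})).comp
      (fun p x => if x.1 ∈ B then g p.1 x.1 else 0)
      fun _ => measurable_of_finite _
  have hbound (p : V × Fin q) (ω : ClusterSamples Cl q) : |sampleTerm g B p ω| ≤ 1 := by
    unfold sampleTerm
    split_ifs
    exacts [hg _ _, by simp]
  calc _ = (uniformOn Set.univ).real {ω : ClusterSamples Cl q | r * (ε * (#A * #B)) ≤
          |∑ p ∈ A ×ˢ univ, (sampleTerm g B p ω -
            ∫ ω : ClusterSamples Cl q, sampleTerm g B p ω ∂uniformOn Set.univ)|} := by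
        simp only [sum_sampleTerm_sub_integral hA hB g hr0.ne', abs_mul, abs_neg, ← hr,
          abs_of_pos hr0, mul_le_mul_iff_right₀ hr0]
    _ ≤ _ := measureReal_le_abs_sum_sub_integral_le hindep
        (fun _ => (measurable_of_finite _).aemeasurable) (fun p => .of_forall (hbound p))
        (t := ε / 2) (by linarith) (by linarith) _ _
    _ ≤ 2 * Real.exp (-(ε / 2 * (r * (ε * (#A * #B)))) + (ε / 2) ^ 2 * (r * (#A * #B))) := by
        gcongr
        exact sum_integral_sampleTerm_sq_le hA hB hg
    _ = _ := by ring_nf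

end CutSum

section UnionBound

lemma half_min_le_mul_div_add {a b : ℝ} (ha : 0 ≤ a) (hb : 0 ≤ b) :
    min a b / 2 ≤ a * b / (a + b) := by
  obtain hab | hab := (add_nonneg ha hb).eq_or_lt
  · simp [show a = 0 by linarith, show b = 0 by linarith]
  · rw [div_le_div_iff₀ two_pos hab]
    obtain h | h := le_total a b
    · rw [min_eq_left h]
      nlinarith
    · rw [min_eq_right h]
      nlinarith

lemma exp_neg_mul_mul_div_add_le {c : ℝ} (hc : 0 ≤ c) (a b : ℕ) :
    Real.exp (-(c * (a * b / (a + b)))) ≤ Real.exp (-(c / 2)) ^ a + Real.exp (-(c / 2)) ^ b := by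
  have hmin : c / 2 * min (a : ℝ) b ≤ c * (a * b / (a + b)) := by
    calc c / 2 * min (a : ℝ) b = c * (min (a : ℝ) b / 2) := by ring
      _ ≤ _ := mul_le_mul_of_nonneg_left
        (half_min_le_mul_div_add a.cast_nonneg b.cast_nonneg) hc
  rw [← Real.exp_nat_mul, ← Real.exp_nat_mul]
  obtain h | h := min_choice (a : ℝ) b <;> rw [h] at hmin
  · exact (Real.exp_le_exp.2 (by linarith)).trans (le_add_of_nonneg_right (Real.exp_nonneg _))
  · exact (Real.exp_le_exp.2 (by linarith)).trans (le_add_of_nonneg_left (Real.exp_nonneg _))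

lemma sum_ssubsets_erase_empty_pow_add_pow_le {α R : Type*} [CommRing R] [PartialOrder R]
    [IsOrderedRing R] (s : Finset α) {x : R} (hx : 0 ≤ x) :
    ∑ A ∈ s.ssubsets.erase ∅, (x ^ #A + x ^ (#s - #A)) ≤ 2 * ((x + 1) ^ #s - 1) := by
  have hcard : ∑ A ∈ s.ssubsets.erase ∅, x ^ #A ≤ (x + 1) ^ #s - 1 := by
    calc _ ≤ ∑ A ∈ s.powerset.erase ∅, x ^ #A :=
          sum_le_sum_of_subset_of_nonneg (erase_subset_erase _ (erase_subset _ _)) fun _ _ _ => by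
            positivity
      _ = (x + 1) ^ #s - 1 := by
          rw [sum_erase_eq_sub (empty_mem_powerset s), ← sum_pow_mul_eq_add_pow]
          simp
  have hcard_compl : ∑ A ∈ s.ssubsets.erase ∅, x ^ (#s - #A) ≤ (x + 1) ^ #s - 1 := by
    calc _ ≤ ∑ A ∈ s.powerset.erase s, x ^ (#s - #A) :=
          sum_le_sum_of_subset_of_nonneg (erase_subset _ _) fun _ _ _ => by positivity
      _ = (x + 1) ^ #s - 1 := by
          rw [sum_erase_eq_sub (mem_powerset_self s), add_comm x, ← sum_pow_mul_eq_add_pow]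
          simp
  rw [sum_add_distrib, two_mul]
  exact add_le_add hcard hcard_compl

lemma add_one_pow_sub_one_le {x : ℝ} (hx : 0 ≤ x) {m : ℕ} (hmx : m * x ≤ 1) :
    (x + 1) ^ m - 1 ≤ 2 * (m * x) := by
  have hmx0 : 0 ≤ m * x := by positivity
  calc (x + 1) ^ m - 1 ≤ Real.exp x ^ m - 1 := by gcongr; exact Real.add_one_le_exp x
    _ = Real.exp (m * x) - 1 := by rw [Real.exp_nat_mul]
    _ ≤ 2 * (m * x) := by
      nlinarith [exp_le_one_add_add_sq (abs_le.2 ⟨by linarith, hmx⟩)]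

end UnionBound

section UniformDeviation

variable {V : Type*} {k q : ℕ} {Cl : V → Fin k}

lemma cutSumError_empty_left (g : V → V → ℝ) (D B : Finset V) (ω : ClusterSamples Cl q) :
    cutSumError g D ∅ B ω = 0 := by
  simp [cutSumError]

lemma cutSumError_empty_right (g : V → V → ℝ) (D A : Finset V) (ω : ClusterSamples Cl q) :
    cutSumError g D A ∅ ω = 0 := by
  simp [cutSumError, sampleTerm]

variable [Fintype V]

lemma sum_card_cluster (Cl : V → Fin k) : ∑ i, #(cluster Cl i) = Fintype.card V :=
  (card_eq_sum_card_fiberwise fun _ _ => mem_coe.2 (mem_univ _)).symm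

variable [MeasurableSpace V] [MeasurableSingletonClass V]

lemma measureReal_le_abs_cutSumError_sdiff_le {i : Fin k} {A : Finset V} (hA : A ⊆ cluster Cl i)
    {g : V → V → ℝ} (hg : ∀ u v, |g u v| ≤ 1) {ε : ℝ} (hε0 : 0 ≤ ε) (hε2 : ε ≤ 2) :
    (uniformOn Set.univ).real {ω : ClusterSamples Cl q | ε * (#A * #(cluster Cl i \ A)) ≤
        |cutSumError g (cluster Cl i) A (cluster Cl i \ A) ω|} ≤
      2 * (Real.exp (-(ε ^ 2 / 8 * q)) ^ #A +
        Real.exp (-(ε ^ 2 / 8 * q)) ^ (#(cluster Cl i) - #A)) := by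
  have hcard : (#(cluster Cl i) : ℝ) = #A + #(cluster Cl i \ A) := by
    exact_mod_cast (card_sdiff_add_card_eq_card hA).symm.trans (add_comm _ _)
  have hexponent : ε ^ 2 / 4 * (q / #(cluster Cl i) * (#A * #(cluster Cl i \ A))) =
      ε ^ 2 / 4 * q * (#A * #(cluster Cl i \ A) / (#A + #(cluster Cl i \ A))) := by
    rw [← hcard]
    ring
  have hhalf : ε ^ 2 / 8 * q = ε ^ 2 / 4 * q / 2 := by ring
  refine (measureReal_le_abs_cutSumError_le hA sdiff_subset hg hε0 hε2).trans ?_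
  rw [hexponent, hhalf, ← card_sdiff_of_subset hA]
  gcongr
  exact exp_neg_mul_mul_div_add_le (by positivity) _ _

lemma measureReal_exists_subset_cluster_lt_abs_cutSumError_le (i : Fin k) {g : V → V → ℝ}
    (hg : ∀ u v, |g u v| ≤ 1) {ε : ℝ} (hε0 : 0 ≤ ε) (hε2 : ε ≤ 2) :
    (uniformOn Set.univ).real {ω : ClusterSamples Cl q | ∃ A ⊆ cluster Cl i,
        ε * (#A * #(cluster Cl i \ A)) <
          |cutSumError g (cluster Cl i) A (cluster Cl i \ A) ω|} ≤
      8 * (#(cluster Cl i) * Real.exp (-(ε ^ 2 / 8 * q))) := by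
  set x := Real.exp (-(ε ^ 2 / 8 * q))
  obtain hx | hx := lt_or_ge 1 (#(cluster Cl i) * x)
  · exact measureReal_le_one.trans (by linarith)
  calc _ ≤ (uniformOn Set.univ).real (⋃ A ∈ (cluster Cl i).ssubsets.erase ∅,
          {ω : ClusterSamples Cl q | ε * (#A * #(cluster Cl i \ A)) ≤
            |cutSumError g (cluster Cl i) A (cluster Cl i \ A) ω|}) := by
        refine measureReal_mono ?_ (measure_ne_top _ _)
        rintro ω ⟨A, hA, hω⟩
        have hA_empty : A ≠ ∅ := by
          rintro rfl
          simp [cutSumError_empty_left] at hω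
        have hA_cluster : A ≠ cluster Cl i := by
          rintro rfl
          simp [cutSumError_empty_right] at hω
        exact Set.mem_biUnion
          (mem_erase.2 ⟨hA_empty, mem_ssubsets.2 (hA.ssubset_of_ne hA_cluster)⟩) hω.le
    _ ≤ ∑ A ∈ (cluster Cl i).ssubsets.erase ∅, 2 * (x ^ #A + x ^ (#(cluster Cl i) - #A)) :=
        (measureReal_biUnion_finset_le _ _).trans <| sum_le_sum fun A hA =>
          measureReal_le_abs_cutSumError_sdiff_le
            (mem_ssubsets.1 (mem_of_mem_erase hA)).subset hg hε0 hε2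
    _ ≤ 2 * (2 * (2 * (#(cluster Cl i) * x))) := by
        rw [← mul_sum]
        gcongr
        refine (sum_ssubsets_erase_empty_pow_add_pow_le _ (Real.exp_nonneg _)).trans ?_
        gcongr
        exact add_one_pow_sub_one_le (Real.exp_nonneg _) hx
    _ = 8 * (#(cluster Cl i) * x) := by ring

lemma measureReal_exists_lt_abs_cutSumError_le {g : V → V → ℝ} (hg : ∀ u v, |g u v| ≤ 1) {ε : ℝ}
    (hε0 : 0 ≤ ε) (hε2 : ε ≤ 2) :
    (uniformOn Set.univ).real {ω : ClusterSamples Cl q | ∃ i, ∃ A ⊆ cluster Cl i,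
        ε * (#A * #(cluster Cl i \ A)) <
          |cutSumError g (cluster Cl i) A (cluster Cl i \ A) ω|} ≤
      8 * (Fintype.card V * Real.exp (-(ε ^ 2 / 8 * q))) := by
  calc _ ≤ ∑ i, 8 * (#(cluster Cl i) * Real.exp (-(ε ^ 2 / 8 * q))) := by
        rw [Set.ofPred_exists]
        exact (measureReal_iUnion_fintype_le _).trans <| sum_le_sum fun i _ =>
          measureReal_exists_subset_cluster_lt_abs_cutSumError_le i hg hε0 hε2
    _ = _ := by rw [← mul_sum, ← sum_mul, ← Nat.cast_sum, sum_card_cluster]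

end UniformDeviation

section Clustering

variable {V : Type*} {k : ℕ}

/-- The change `±1` in the cost of a pair when it is separated, that is, the value of `f_{u,v}(C')`
for every `C'` that separates two points of the same cluster of `C`. -/
noncomputable def separationCost (G : SimpleGraph V) (u v : V) : ℝ :=
  if G.Adj u v then 1 else -1

lemma abs_separationCost_le_one (G : SimpleGraph V) (u v : V) : |separationCost G u v| ≤ 1 := by
  unfold separationCost
  split_ifs <;> simp

lemma fuv_eq_separationCost (G : SimpleGraph V) {Cl Cl' : V → Fin k} {u v : V}
    (h : Cl u = Cl v) (h' : Cl' u ≠ Cl' v) : fuv G Cl Cl' u v = separationCost G u v := by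
  simp only [fuv, costuv, separationCost, h, h', if_true, if_false]
  split_ifs <;> norm_num

lemma cutSumError_fuv [Fintype V] {q : ℕ} (G : SimpleGraph V) {Cl : V → Fin k} (Cl' : V → Fin k)
    (i j : Fin k) (ω : ClusterSamples Cl q) :
    cutSumError (fuv G Cl Cl') (cluster Cl i) (cluster Cl i ∩ cluster Cl' j)
        (cluster Cl i \ (cluster Cl i ∩ cluster Cl' j)) ω =
      cutSumError (separationCost G) (cluster Cl i) (cluster Cl i ∩ cluster Cl' j)
        (cluster Cl i \ (cluster Cl i ∩ cluster Cl' j)) ω := by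
  refine cutSumError_congr (fun u hu v hv => ?_) _ ω
  simp only [cluster, mem_inter, mem_sdiff, mem_filter, mem_univ, true_and] at hu hv
  exact fuv_eq_separationCost G (hu.1.trans hv.1.symm) fun h => hv.2 ⟨hv.1, h ▸ hu.2⟩

end Clustering

section SampleSize

lemma eight_mul_mul_exp_neg_le_zpow {n : ℕ} (hn : 2 ≤ n) {c : ℝ} (hc : 8 * Real.log n ≤ c) :
    8 * (n * Real.exp (-c)) ≤ (n : ℝ) ^ (-3 : ℤ) := by
  have hn2 : (2 : ℝ) ≤ n := by exact_mod_cast hn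
  have hexp : Real.exp (-c) ≤ ((n : ℝ) ^ 8)⁻¹ := by
    rw [Real.exp_neg]
    gcongr
    calc (n : ℝ) ^ 8 = Real.exp (8 * Real.log n) := by
          rw [← Real.exp_log (show (0 : ℝ) < n ^ 8 by positivity), Real.log_pow, Nat.cast_ofNat]
      _ ≤ Real.exp c := Real.exp_le_exp.2 hc
  have hpow : (8 : ℝ) ≤ n ^ 4 := (by norm_num : (8 : ℝ) ≤ 2 ^ 4).trans (by gcongr)
  calc 8 * (n * Real.exp (-c)) ≤ n ^ 4 * (n * ((n : ℝ) ^ 8)⁻¹) := by gcongr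
    _ = (n : ℝ) ^ (-3 : ℤ) := by field_simp

lemma mul_log_le_sq_mul_of_div_pow_four_le {c ε : ℝ} {k n q : ℕ} (hc : 0 ≤ c) (hk : k ≠ 0)
    (hε0 : 0 < ε) (hε1 : ε ≤ 1) (hq : c * (k : ℝ) ^ 2 * Real.log n / ε ^ 4 ≤ q) :
    c * Real.log n ≤ ε ^ 2 * q := by
  have hk1 : (1 : ℝ) ≤ k := by exact_mod_cast Nat.one_le_iff_ne_zero.2 hk
  calc c * Real.log n = c * 1 * Real.log n := by rw [mul_one]
    _ ≤ c * (k : ℝ) ^ 2 * Real.log n := by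
      gcongr
      exact one_le_pow₀ hk1
    _ ≤ q * ε ^ 4 := (div_le_iff₀ (by positivity)).1 hq
    _ ≤ q * ε ^ 2 := by
      gcongr ?_ * ?_
      exact pow_le_pow_of_le_one hε0.le hε1 (by norm_num)
    _ = ε ^ 2 * q := mul_comm _ _

end SampleSize

theorem stmt14_general {V : Type*} [Fintype V] {k q : ℕ} (G : SimpleGraph V) (Cl : V → Fin k)
    {ε : ℝ} (hε0 : 0 ≤ ε) (hε2 : ε ≤ 2) (hn : 2 ≤ Fintype.card V)
    (hq : 64 * Real.log (Fintype.card V) ≤ ε ^ 2 * q) :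
    1 - (Fintype.card V : ℝ) ^ (-3 : ℤ) ≤
      ((Finset.univ.filter fun ω : ∀ u : V, Fin q → {v : V // Cl v = Cl u} =>
          ∀ (Cl' : V → Fin k) (i j : Fin k),
            |(∑ u ∈ cluster Cl i ∩ cluster Cl' j,
                  ∑ v ∈ cluster Cl i \ (cluster Cl i ∩ cluster Cl' j),
                    fuv G Cl Cl' u v)
              - ((cluster Cl i).card : ℝ) / (q : ℝ) *
                  ∑ u ∈ cluster Cl i ∩ cluster Cl' j, ∑ s : Fin q,
                    if (ω u s).1 ∈ cluster Cl i \ (cluster Cl i ∩ cluster Cl' j) then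
                      fuv G Cl Cl' u (ω u s).1
                    else 0|
            ≤ ε * (((cluster Cl i ∩ cluster Cl' j).card : ℝ) *
                ((cluster Cl i \ (cluster Cl i ∩ cluster Cl' j)).card : ℝ))).card : ℝ)
        / (Fintype.card (∀ u : V, Fin q → {v : V // Cl v = Cl u}) : ℝ) := by
  let : MeasurableSpace V := ⊤
  let bad : Set (ClusterSamples Cl q) := {ω | ∃ i, ∃ A ⊆ cluster Cl i,
    ε * (#A * #(cluster Cl i \ A)) <
      |cutSumError (separationCost G) (cluster Cl i) A (cluster Cl i \ A) ω|}
  have hbad : (uniformOn Set.univ).real bad ≤ (Fintype.card V : ℝ) ^ (-3 : ℤ) :=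
    (measureReal_exists_lt_abs_cutSumError_le (abs_separationCost_le_one G) hε0 hε2).trans
      (eight_mul_mul_exp_neg_le_zpow hn (by linarith))
  rw [← measureReal_uniformOn_univ_setOf]
  calc _ ≤ 1 - (uniformOn Set.univ).real bad := by gcongr
    _ = (uniformOn Set.univ).real badᶜ := (probReal_compl_eq_one_sub .of_discrete).symm
    _ ≤ _ := by
      refine measureReal_mono fun ω hω Cl' i j => not_lt.1 fun hlt => hω ?_
      exact ⟨i, _, inter_subset_left, hlt.trans_eq (congrArg abs (cutSumError_fuv G Cl' i j ω))⟩

/-- Lemma 1 of the paper.  There is a universal constant `c₂ > 0` such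
that the following holds.  Let `ε ∈ (0,1)`, `|V| = n ≥ 2`, and let `q` be an integer with
`q ≥ c₂ k² (log n)/ε⁴`.  Fix a pivotal `k`-clustering `C` (assignment `Cl`).  For each
`i ∈ [k]` and `u ∈ C_i`, the sample `S_{ui}` consists of `q` points drawn independently
and uniformly with replacement from `C_i`; the family of samples is a uniform element `ω`
of `Ω = Π (u : V), Fin q → C_{Cl u}`.  Then with probability at least `1 − n⁻³`,
simultaneously for all `k`-clusterings `C'` and all `i, j ∈ [k]`:
`|F_{i,j}(C') − F̂_{i,j}(C')| ≤ ε·|C_{ij} × (C_i \ C_{ij})|`. -/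
theorem stmt14 :
    ∃ c₂ : ℝ, 0 < c₂ ∧
      ∀ (V : Type) [Fintype V] (k q : ℕ) (G : SimpleGraph V) (Cl : V → Fin k) (ε : ℝ),
        0 < ε → ε < 1 → 2 ≤ Fintype.card V →
        c₂ * (k : ℝ) ^ 2 * Real.log (Fintype.card V) / ε ^ 4 ≤ (q : ℝ) →
        1 - (Fintype.card V : ℝ) ^ (-3 : ℤ) ≤
          ((Finset.univ.filter fun ω : ∀ u : V, Fin q → {v : V // Cl v = Cl u} =>
              ∀ (Cl' : V → Fin k) (i j : Fin k),
                |(∑ u ∈ cluster Cl i ∩ cluster Cl' j,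
                      ∑ v ∈ cluster Cl i \ (cluster Cl i ∩ cluster Cl' j),
                        fuv G Cl Cl' u v)
                  - ((cluster Cl i).card : ℝ) / (q : ℝ) *
                      ∑ u ∈ cluster Cl i ∩ cluster Cl' j, ∑ s : Fin q,
                        if (ω u s).1 ∈ cluster Cl i \ (cluster Cl i ∩ cluster Cl' j) then
                          fuv G Cl Cl' u (ω u s).1
                        else 0|
                ≤ ε * (((cluster Cl i ∩ cluster Cl' j).card : ℝ) *
                    ((cluster Cl i \ (cluster Cl i ∩ cluster Cl' j)).card : ℝ))).card : ℝ)
            / (Fintype.card (∀ u : V, Fin q → {v : V // Cl v = Cl u}) : ℝ) := by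
  refine ⟨64, by norm_num, fun V _ k q G Cl ε hε0 hε1 hn hq => ?_⟩
  obtain ⟨v⟩ := Fintype.card_pos_iff.1 (two_pos.trans_le hn)
  exact stmt14_general G Cl hε0.le (by linarith) hn
    (mul_log_le_sq_mul_of_div_pow_four_le (by norm_num) (Cl v).pos.ne' hε0 hε1.le hq)
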